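/- arXiv:1701.01085 — 5 statements merged into one kernel-verified Lean document; each statement's English description precedes it below -/
import Mathlib

section
/- Let (E, 𝓔, m) be a σ-finite measure space and let p : (0,∞) × E × E → [0,∞] be measurable, symmetric in the sense that p(t,x,y) = p(t,y,x) for all t > 0 and x, y ∈ E, and satisfy the Chapman–Kolmogorov identity ∫_E p(t,y,x)·p(s,x,y) m(dx) = p(t+s,y,y) for all s, t > 0 and y ∈ E. Fix α > 0 and y ∈ E, and define u^α(x,y) := ∫₀^∞ e^{−αt} p(t,x,y) dt. Then ∫_E (u^α(x,y))² m(dx) = ∫₀^∞ t·e^{−αt}·p(t,y,y) dt. -/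
open MeasureTheory Set
open scoped ENNReal

theorem aux_conv (g : ℝ → ℝ≥0∞) (hg : Measurable g) :
    ∫⁻ s in Set.Ioi (0 : ℝ), ∫⁻ t in Set.Ioi (0 : ℝ), g (t + s)
      = ∫⁻ t in Set.Ioi (0 : ℝ), ENNReal.ofReal t * g t := by
  have h1 : ∀ s ∈ Set.Ioi (0 : ℝ), ∫⁻ t in Set.Ioi (0 : ℝ), g (t + s)
      = ∫⁻ t in Set.Ioi (0 : ℝ), (Set.Iio t).indicator (fun _ => g t) s := by
    intro s hs
    have hs' : 0 < s := hs
    rw [← lintegral_indicator measurableSet_Ioi, ← lintegral_indicator measurableSet_Ioi,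
      ← lintegral_sub_right_eq_self _ s]
    refine lintegral_congr fun t => ?_
    by_cases h : s < t
    · have : 0 < t := hs'.trans h
      simp [Set.indicator, h, this]
    · simp [Set.indicator, h]
  rw [setLIntegral_congr_fun measurableSet_Ioi h1, lintegral_lintegral_swap]
  · refine setLIntegral_congr_fun measurableSet_Ioi fun t ht => ?_
    rw [lintegral_indicator measurableSet_Iio, lintegral_const,
      Measure.restrict_restrict measurableSet_Iio, Measure.restrict_apply_univ,
      Set.inter_comm, Set.Ioi_inter_Iio, Real.volume_Ioo, sub_zero, mul_comm]
  · have hS : MeasurableSet {q : ℝ × ℝ | q.1 < q.2} :=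
      measurableSet_lt measurable_fst measurable_snd
    have := (hg.comp measurable_snd : Measurable fun q : ℝ × ℝ => g q.2).indicator hS
    refine Measurable.aemeasurable ?_
    convert this using 1
    ext q
    simp [Function.uncurry, Set.indicator]



/-- Let `p` be a measurable, symmetric kernel on a σ-finite measure space satisfying the
Chapman–Kolmogorov identity, and let `u^α(x,y) = ∫₀^∞ e^{−αt} p(t,x,y) dt`. Then
`∫ (u^α(x,y))² m(dx) = ∫₀^∞ t e^{−αt} p(t,y,y) dt`. -/
theorem stmt_3 {E : Type*} [MeasurableSpace E] (m : Measure E) [SigmaFinite m]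
    (p : ℝ → E → E → ℝ≥0∞)
    (hmeas : Measurable fun q : ℝ × E × E => p q.1 q.2.1 q.2.2)
    (hsymm : ∀ t : ℝ, 0 < t → ∀ x y : E, p t x y = p t y x)
    (hCK : ∀ s t : ℝ, 0 < s → 0 < t → ∀ y : E,
      ∫⁻ x, p t y x * p s x y ∂m = p (t + s) y y)
    (α : ℝ) (hα : 0 < α) (y : E) :
    ∫⁻ x, (∫⁻ t in Set.Ioi (0 : ℝ), ENNReal.ofReal (Real.exp (-α * t)) * p t x y) ^ 2 ∂m
      = ∫⁻ t in Set.Ioi (0 : ℝ), ENNReal.ofReal (t * Real.exp (-α * t)) * p t y y := by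

  set e : ℝ → ℝ≥0∞ := fun t => ENNReal.ofReal (Real.exp (-α * t)) with he
  have hem : Measurable e := by fun_prop
  have hadd : ∀ t s, e t * e s = e (t + s) := by
    intro t s
    simp only [he]
    rw [← ENNReal.ofReal_mul (Real.exp_nonneg _), ← Real.exp_add, mul_add]
  have hpm : Measurable fun q : ℝ × E => p q.1 q.2 y :=
    hmeas.comp (measurable_fst.prodMk (measurable_snd.prodMk measurable_const))
  have hpy : Measurable fun t : ℝ => p t y y :=
    hmeas.comp (measurable_id.prodMk (measurable_const.prodMk measurable_const))
  have hF : Measurable fun q : ℝ × E => e q.1 * p q.1 q.2 y :=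
    (hem.comp measurable_fst).mul hpm
  have hFx : ∀ x, Measurable fun t => e t * p t x y := fun x =>
    hF.comp (measurable_id.prodMk measurable_const)
  have hFt : ∀ t, Measurable fun x => e t * p t x y := fun t =>
    hF.comp (measurable_const.prodMk measurable_id)
  have hpx : ∀ t, Measurable fun x => p t x y := fun t =>
    hpm.comp (measurable_const.prodMk measurable_id)
  have hU : Measurable fun x => ∫⁻ t in Set.Ioi (0 : ℝ), e t * p t x y :=
    Measurable.lintegral_prod_left' hF
  calc ∫⁻ x, (∫⁻ t in Set.Ioi (0 : ℝ), e t * p t x y) ^ 2 ∂m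
      = ∫⁻ x, (∫⁻ s in Set.Ioi (0 : ℝ), (e s * p s x y) *
          ∫⁻ t in Set.Ioi (0 : ℝ), e t * p t x y) ∂m := by
        refine lintegral_congr fun x => ?_
        rw [lintegral_mul_const _ (hFx x), sq]
    _ = ∫⁻ s in Set.Ioi (0 : ℝ), ∫⁻ x, (e s * p s x y) *
          (∫⁻ t in Set.Ioi (0 : ℝ), e t * p t x y) ∂m := by
        refine lintegral_lintegral_swap (Measurable.aemeasurable ?_)
        exact (hF.comp measurable_swap).mul (hU.comp measurable_fst)
    _ = ∫⁻ s in Set.Ioi (0 : ℝ), ∫⁻ t in Set.Ioi (0 : ℝ),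
          e (t + s) * p (t + s) y y := by
        refine setLIntegral_congr_fun measurableSet_Ioi fun s hs => ?_
        have h2 : ∀ x, (e s * p s x y) * ∫⁻ t in Set.Ioi (0 : ℝ), e t * p t x y
            = ∫⁻ t in Set.Ioi (0 : ℝ), (e s * p s x y) * (e t * p t x y) := fun x =>
          (lintegral_const_mul _ (hFx x)).symm
        simp only [h2]
        rw [lintegral_lintegral_swap]
        · refine setLIntegral_congr_fun measurableSet_Ioi fun t ht => ?_
          rw [← hCK s t hs ht y, ← hadd, ← lintegral_const_mul]
          · refine lintegral_congr fun x => ?_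
            rw [hsymm t ht y x]
            ring
          · simp only [hsymm t ht y]
            exact (hpx t).mul (hpx s)
        · refine Measurable.aemeasurable ?_
          exact ((hFt s).comp measurable_fst).mul (hF.comp measurable_swap)
    _ = ∫⁻ t in Set.Ioi (0 : ℝ), ENNReal.ofReal t * (e t * p t y y) :=
        aux_conv (fun t => e t * p t y y) (hem.mul hpy)
    _ = _ := by
        refine setLIntegral_congr_fun measurableSet_Ioi fun t ht => ?_
        simp only [he]
        rw [ENNReal.ofReal_mul (le_of_lt ht), mul_assoc]
end

section
/- Let (E, 𝓔, m) be a σ-finite measure space and let p : (0,∞) × E × E → [0,∞] be measurable, symmetric in the sense that p(t,x,y) = p(t,y,x) for all t > 0 and x, y ∈ E, and satisfy the Chapman–Kolmogorov identity ∫_E p(t,y,x)·p(s,x,y) m(dx) = p(t+s,y,y) for all s, t > 0 and y ∈ E. Fix y ∈ E, 0 < ε < α, and define u^β(x,y) := ∫₀^∞ e^{−βt} p(t,x,y) dt for β > 0. Then ∫_E (u^α(x,y))² m(dx) ≤ (1/ε)·u^{α−ε}(y,y); in particular, if u^{α−ε}(y,y) < ∞ then x ↦ u^α(x,y) is square-integrable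 with respect to m. -/
open MeasureTheory Set
open scoped ENNReal

/-- For a measurable, symmetric Chapman–Kolmogorov kernel `p` on a σ-finite measure space,
with `u^β(x,y) = ∫₀^∞ e^{−βt} p(t,x,y) dt` and `0 < ε < α`:
`∫ (u^α(x,y))² m(dx) ≤ (1/ε)·u^{α−ε}(y,y)`; in particular, if `u^{α−ε}(y,y) < ∞`,
then `x ↦ u^α(x,y)` is square-integrable with respect to `m`. -/
theorem stmt_4 {E : Type*} [MeasurableSpace E] (m : Measure E) [SigmaFinite m]
    (p : ℝ → E → E → ℝ≥0∞)
    (hmeas : Measurable fun q : ℝ × E × E => p q.1 q.2.1 q.2.2)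
    (hsymm : ∀ t : ℝ, 0 < t → ∀ x y : E, p t x y = p t y x)
    (hCK : ∀ s t : ℝ, 0 < s → 0 < t → ∀ y : E,
      ∫⁻ x, p t y x * p s x y ∂m = p (t + s) y y)
    (α ε : ℝ) (hε : 0 < ε) (hεα : ε < α) (y : E) :
    (∫⁻ x, (∫⁻ t in Set.Ioi (0 : ℝ), ENNReal.ofReal (Real.exp (-α * t)) * p t x y) ^ 2 ∂m
      ≤ ENNReal.ofReal (1 / ε) *
          ∫⁻ t in Set.Ioi (0 : ℝ), ENNReal.ofReal (Real.exp (-(α - ε) * t)) * p t y y) ∧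
    ((∫⁻ t in Set.Ioi (0 : ℝ), ENNReal.ofReal (Real.exp (-(α - ε) * t)) * p t y y) < ⊤ →
      ∫⁻ x, (∫⁻ t in Set.Ioi (0 : ℝ), ENNReal.ofReal (Real.exp (-α * t)) * p t x y) ^ 2 ∂m < ⊤) := by
  have hpy : Measurable fun q : ℝ × E => p q.1 q.2 y :=
    hmeas.comp (measurable_fst.prodMk (measurable_snd.prodMk measurable_const))
  have hpyy : Measurable fun t : ℝ => p t y y :=
    hpy.comp (measurable_id.prodMk measurable_const)
  have he : Measurable fun t : ℝ => ENNReal.ofReal (Real.exp (-α * t)) := by fun_prop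
  set f : ℝ → E → ℝ≥0∞ := fun t x => ENNReal.ofReal (Real.exp (-α * t)) * p t x y with hf
  have hfm : Measurable fun q : ℝ × E => f q.1 q.2 := (he.comp measurable_fst).mul hpy
  have hf1 : ∀ x, Measurable fun t => f t x := fun x =>
    hfm.comp (measurable_id.prodMk measurable_const)
  have hf2 : ∀ t, Measurable fun x => f t x := fun t =>
    hfm.comp (measurable_const.prodMk measurable_id)
  set g : ℝ → ℝ≥0∞ := fun t => ENNReal.ofReal (Real.exp (-α * t)) * p t y y with hg
  have hgm : Measurable g := he.mul hpyy
  have hum : Measurable fun x => ∫⁻ t in Set.Ioi (0 : ℝ), f t x :=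
    Measurable.lintegral_prod_right (f := fun x t => f t x) (hfm.comp measurable_swap)
  have key : ∫⁻ x, (∫⁻ t in Set.Ioi (0 : ℝ), f t x) ^ 2 ∂m
      = ∫⁻ s in Set.Ioi (0 : ℝ), ∫⁻ t in Set.Ioi (0 : ℝ), g (t + s) := by
    calc ∫⁻ x, (∫⁻ t in Set.Ioi (0 : ℝ), f t x) ^ 2 ∂m
        = ∫⁻ x, (∫⁻ s in Set.Ioi (0 : ℝ), f s x * (∫⁻ t in Set.Ioi (0 : ℝ), f t x)) ∂m := by
          refine lintegral_congr fun x => ?_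
          rw [lintegral_mul_const _ (hf1 x), sq]
      _ = ∫⁻ s in Set.Ioi (0 : ℝ), ∫⁻ x, f s x * (∫⁻ t in Set.Ioi (0 : ℝ), f t x) ∂m := by
          apply lintegral_lintegral_swap
          exact ((hfm.comp measurable_swap).mul (hum.comp measurable_fst)).aemeasurable
      _ = _ := by
          refine setLIntegral_congr_fun measurableSet_Ioi fun s hs => ?_
          have hs0 : 0 < s := hs
          calc ∫⁻ x, f s x * (∫⁻ t in Set.Ioi (0 : ℝ), f t x) ∂m
              = ∫⁻ x, (∫⁻ t in Set.Ioi (0 : ℝ), f s x * f t x) ∂m := by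
                refine lintegral_congr fun x => ?_
                rw [lintegral_const_mul _ (hf1 x)]
            _ = ∫⁻ t in Set.Ioi (0 : ℝ), ∫⁻ x, f s x * f t x ∂m := by
                apply lintegral_lintegral_swap
                exact (((hf2 s).comp measurable_fst).mul
                  (hfm.comp measurable_swap)).aemeasurable
            _ = _ := by
                refine setLIntegral_congr_fun measurableSet_Ioi fun t ht => ?_
                have ht0 : 0 < t := ht
                have hm2 : Measurable fun x => p t y x * p s x y :=
                  (hmeas.comp (measurable_const.prodMk
                    (measurable_const.prodMk measurable_id))).mul
                  (hpy.comp (measurable_const.prodMk measurable_id))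
                simp only [hg]
                rw [← hCK s t hs0 ht0 y, ← lintegral_const_mul _ hm2]
                refine lintegral_congr fun x => ?_
                simp only [hf]
                rw [hsymm t ht0 x y, show -α * (t + s) = -α * t + -α * s by ring, Real.exp_add,
                  ENNReal.ofReal_mul (Real.exp_pos _).le]
                ring
  have key2 : ∫⁻ s in Set.Ioi (0 : ℝ), ∫⁻ t in Set.Ioi (0 : ℝ), g (t + s)
      = ∫⁻ r in Set.Ioi (0 : ℝ), ENNReal.ofReal r * g r := by
    have h1 : ∀ s ∈ Set.Ioi (0 : ℝ), ∫⁻ t in Set.Ioi (0 : ℝ), g (t + s)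
        = ∫⁻ r in Set.Ioi (0 : ℝ), (Set.Iio r).indicator (fun _ => g r) s := by
      intro s hs
      have hs0 : 0 < s := hs
      rw [← lintegral_indicator measurableSet_Ioi, ← lintegral_indicator measurableSet_Ioi,
        
        ← lintegral_add_right_eq_self ((Set.Ioi (0 : ℝ)).indicator
          fun r => (Set.Iio r).indicator (fun _ => g r) s) s]
      refine lintegral_congr fun t => ?_
      by_cases ht : 0 < t
      · have : 0 < t + s := by linarith
        simp [Set.indicator, ht, this]
      · simp [Set.indicator, ht]
    rw [setLIntegral_congr_fun measurableSet_Ioi h1, lintegral_lintegral_swap]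
    · refine setLIntegral_congr_fun measurableSet_Ioi fun r hr => ?_
      rw [lintegral_indicator measurableSet_Iio, lintegral_const,
        Measure.restrict_restrict measurableSet_Iio, Measure.restrict_apply_univ,
        Set.inter_comm, Set.Ioi_inter_Iio, Real.volume_Ioo, sub_zero, mul_comm]
    · have : (Function.uncurry fun s r : ℝ => (Set.Iio r).indicator (fun _ => g r) s)
          = {q : ℝ × ℝ | q.1 < q.2}.indicator (fun q => g q.2) := by
        ext q
        simp [Function.uncurry, Set.indicator]
      rw [this]
      exact ((hgm.comp measurable_snd).indicator
        (measurableSet_lt measurable_fst measurable_snd)).aemeasurable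
  have main : ∫⁻ x, (∫⁻ t in Set.Ioi (0 : ℝ), f t x) ^ 2 ∂m
      ≤ ENNReal.ofReal (1 / ε) *
          ∫⁻ t in Set.Ioi (0 : ℝ), ENNReal.ofReal (Real.exp (-(α - ε) * t)) * p t y y := by
    rw [key, key2, ← lintegral_const_mul' _ _ ENNReal.ofReal_ne_top]
    refine lintegral_mono fun r => ?_
    simp only [hg]
    rw [← mul_assoc, ← mul_assoc, ← ENNReal.ofReal_mul' (Real.exp_pos _).le,
      ← ENNReal.ofReal_mul' (Real.exp_pos _).le]
    gcongr ?_ * _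
    apply ENNReal.ofReal_le_ofReal
    rw [show -(α - ε) * r = ε * r + -α * r by ring, Real.exp_add, ← mul_assoc]
    gcongr
    rw [one_div, inv_mul_eq_div, le_div_iff₀ hε]
    linarith [Real.add_one_le_exp (ε * r)]
  exact ⟨main, fun h => main.trans_lt (ENNReal.mul_lt_top ENNReal.ofReal_lt_top h)⟩
end

section
/- Let −∞ ≤ l < r ≤ ∞, let s : (l,r) → (0,1) be continuously differentiable with s' > 0, lim_{x→l} s(x) = 0 and lim_{x→r} s(x) = 1, and fix y* ∈ (l,r). Define u(z) := s(z)(1 − s(y*)) for z ≤ y* and u(z) := s(y*)(1 − s(z)) for z > y*. Then for every x ≤ y*: ∫ₓ^{y*} s'(z)/u(z)² dz = (1/(1−s(y*))²)·(1/s(x) − 1/s(y*)); for every x ≥ y*: ∫_{y*}^x s'(z)/u(z)² dz = (1/s(y*)²)·(1/(1−s(x)) − 1/(1−s(y*))); and consequently ∫ₓ^{y*} s'(z)/u(z)² dz → ∞ as x → l and ∫_{y*}^x s'(z)/u(z)² dz → ∞ as x → r. -/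
open MeasureTheory Set Filter
open scoped ENNReal

/-- The open interval `(l,r)` with `EReal` endpoints, viewed as a set of reals. -/
def Iab (l r : EReal) : Set ℝ := {x : ℝ | l < (x : EReal) ∧ (x : EReal) < r}

/-- The filter of real numbers in `(l,r)` approaching the (possibly infinite) point `a`. -/
noncomputable def nearFilter (a l r : EReal) : Filter ℝ :=
  Filter.comap (fun x : ℝ => (x : EReal)) (nhds a) ⊓ Filter.principal (Iab l r)

/-- Explicit formulas for the transformed scale `s_u(x) = ∫ s'/u(·,y*)²` of a transient
diffusion with scale `s` (normalized to `(0,1)`) and potential density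
`u(z) = s(z∧y*)(1−s(z∨y*))`, together with its divergence at both boundaries. -/
theorem stmt_5 (l r : EReal) (hlr : l < r) (ystar : ℝ) (hy : ystar ∈ Iab l r)
    (s s' : ℝ → ℝ)
    (hderiv : ∀ x ∈ Iab l r, HasDerivAt s (s' x) x)
    (hcont : ContinuousOn s' (Iab l r))
    (hpos : ∀ x ∈ Iab l r, 0 < s' x)
    (hrange : ∀ x ∈ Iab l r, s x ∈ Set.Ioo (0 : ℝ) 1)
    (hl : Tendsto s (nearFilter l l r) (nhds 0))
    (hr : Tendsto s (nearFilter r l r) (nhds 1)) :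
    (∀ x ∈ Iab l r, x ≤ ystar →
      ∫ z in x..ystar,
          s' z / (if z ≤ ystar then s z * (1 - s ystar) else s ystar * (1 - s z)) ^ 2
        = (1 / (1 - s ystar) ^ 2) * (1 / s x - 1 / s ystar)) ∧
    (∀ x ∈ Iab l r, ystar ≤ x →
      ∫ z in ystar..x,
          s' z / (if z ≤ ystar then s z * (1 - s ystar) else s ystar * (1 - s z)) ^ 2
        = (1 / s ystar ^ 2) * (1 / (1 - s x) - 1 / (1 - s ystar))) ∧
    Tendsto (fun x => ∫ z in x..ystar,
        s' z / (if z ≤ ystar then s z * (1 - s ystar) else s ystar * (1 - s z)) ^ 2)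
      (nearFilter l l r) Filter.atTop ∧
    Tendsto (fun x => ∫ z in ystar..x,
        s' z / (if z ≤ ystar then s z * (1 - s ystar) else s ystar * (1 - s z)) ^ 2)
      (nearFilter r l r) Filter.atTop := by
  have hsub : ∀ a ∈ Iab l r, ∀ b ∈ Iab l r, ∀ z ∈ Set.Icc a b, z ∈ Iab l r := by
    intro a ha b hb z hz
    exact ⟨lt_of_lt_of_le ha.1 (EReal.coe_le_coe_iff.2 hz.1),
      lt_of_le_of_lt (EReal.coe_le_coe_iff.2 hz.2) hb.2⟩
  have hsc : ContinuousOn s (Iab l r) := fun x hx =>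
    (hderiv x hx).continuousAt.continuousWithinAt
  obtain ⟨hy0, hy1⟩ := hrange ystar hy
  have hy1' : 0 < 1 - s ystar := by linarith
  have h1 : ∀ x ∈ Iab l r, x ≤ ystar →
      ∫ z in x..ystar,
          s' z / (if z ≤ ystar then s z * (1 - s ystar) else s ystar * (1 - s z)) ^ 2
        = (1 / (1 - s ystar) ^ 2) * (1 / s x - 1 / s ystar) := by
    intro x hx hxy
    have hss : Set.uIcc x ystar ⊆ Iab l r := by
      rw [Set.uIcc_of_le hxy]; exact hsub x hx ystar hy
    have e : ∫ z in x..ystar,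
          s' z / (if z ≤ ystar then s z * (1 - s ystar) else s ystar * (1 - s z)) ^ 2
        = ∫ z in x..ystar, s' z / (s z * (1 - s ystar)) ^ 2 := by
      apply intervalIntegral.integral_congr
      intro z hz
      rw [Set.uIcc_of_le hxy] at hz
      simp [hz.2]
    rw [e, intervalIntegral.integral_eq_sub_of_hasDerivAt
      (f := fun z => -((1 / (1 - s ystar) ^ 2) * (s z)⁻¹))]
    · simp only [one_div]; ring
    · intro z hz
      have hz0 := (hrange z (hss hz)).1
      have := (((hderiv z (hss hz)).inv hz0.ne').const_mul (1 / (1 - s ystar) ^ 2)).neg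
      refine this.congr_deriv ?_
      field_simp
    · apply ContinuousOn.intervalIntegrable
      apply ContinuousOn.div (hcont.mono hss)
      · exact ((hsc.mono hss).mul continuousOn_const).pow 2
      · intro z hz
        have hz0 := (hrange z (hss hz)).1
        positivity
  have h2 : ∀ x ∈ Iab l r, ystar ≤ x →
      ∫ z in ystar..x,
          s' z / (if z ≤ ystar then s z * (1 - s ystar) else s ystar * (1 - s z)) ^ 2
        = (1 / s ystar ^ 2) * (1 / (1 - s x) - 1 / (1 - s ystar)) := by
    intro x hx hxy
    have hss : Set.uIcc ystar x ⊆ Iab l r := by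
      rw [Set.uIcc_of_le hxy]; exact hsub ystar hy x hx
    have e : ∫ z in ystar..x,
          s' z / (if z ≤ ystar then s z * (1 - s ystar) else s ystar * (1 - s z)) ^ 2
        = ∫ z in ystar..x, s' z / (s ystar * (1 - s z)) ^ 2 := by
      apply intervalIntegral.integral_congr
      intro z hz
      rw [Set.uIcc_of_le hxy] at hz
      rcases hz.1.eq_or_lt with h | h
      · subst h; simp
      · simp [not_le.2 h]
    rw [e, intervalIntegral.integral_eq_sub_of_hasDerivAt
      (f := fun z => (1 / s ystar ^ 2) * (1 - s z)⁻¹)]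
    · simp only [one_div]; ring
    · intro z hz
      have hz0 : 0 < 1 - s z := by linarith [(hrange z (hss hz)).2]
      have := ((((hderiv z (hss hz)).const_sub 1).inv hz0.ne').const_mul (1 / s ystar ^ 2))
      refine this.congr_deriv ?_
      field_simp
    · apply ContinuousOn.intervalIntegrable
      apply ContinuousOn.div (hcont.mono hss)
      · exact (continuousOn_const.mul (continuousOn_const.sub (hsc.mono hss))).pow 2
      · intro z hz
        have hz0 : 0 < 1 - s z := by linarith [(hrange z (hss hz)).2]
        positivity
  have hmem : ∀ a, ∀ᶠ x in nearFilter a l r, x ∈ Iab l r := fun a =>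
    Filter.mem_inf_of_right (Filter.mem_principal_self _)
  refine ⟨h1, h2, ?_, ?_⟩
  · have hlt : ∀ᶠ x in nearFilter l l r, x ≤ ystar := by
      apply Filter.mem_inf_of_left
      exact ⟨Set.Iio (ystar : EReal), Iio_mem_nhds hy.1,
        fun x hx => (EReal.coe_lt_coe_iff.1 hx).le⟩
    have hs0 : Tendsto s (nearFilter l l r) (nhdsWithin 0 (Set.Ioi 0)) :=
      tendsto_nhdsWithin_iff.2 ⟨hl, (hmem l).mono fun x hx => (hrange x hx).1⟩
    have ht : Tendsto (fun x => (1 / (1 - s ystar) ^ 2) * ((s x)⁻¹ + -(1 / s ystar)))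
        (nearFilter l l r) atTop :=
      (tendsto_atTop_add_const_right _ _ (tendsto_inv_nhdsGT_zero.comp hs0)).const_mul_atTop
        (by positivity)
    refine ht.congr' ?_
    filter_upwards [hlt, hmem l] with x hx hx'
    rw [h1 x hx' hx, one_div (s x), ← sub_eq_add_neg]
  · have hlt : ∀ᶠ x in nearFilter r l r, ystar ≤ x := by
      apply Filter.mem_inf_of_left
      exact ⟨Set.Ioi (ystar : EReal), Ioi_mem_nhds hy.2,
        fun x hx => (EReal.coe_lt_coe_iff.1 hx).le⟩
    have hs0 : Tendsto (fun x => 1 - s x) (nearFilter r l r) (nhdsWithin 0 (Set.Ioi 0)) := by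
      refine tendsto_nhdsWithin_iff.2 ⟨?_, (hmem r).mono fun x hx => ?_⟩
      · simpa using hr.const_sub 1
      · exact sub_pos.2 (hrange x hx).2
    have ht : Tendsto (fun x => (1 / s ystar ^ 2) * ((1 - s x)⁻¹ + -(1 / (1 - s ystar))))
        (nearFilter r l r) atTop :=
      (tendsto_atTop_add_const_right _ _ (tendsto_inv_nhdsGT_zero.comp hs0)).const_mul_atTop
        (by positivity)
    refine ht.congr' ?_
    filter_upwards [hlt, hmem r] with x hx hx'
    rw [h2 x hx' hx, one_div (1 - s x), ← sub_eq_add_neg]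
end

section
/- Let −∞ ≤ l < r ≤ ∞, y* ∈ (l,r), let s : (l,r) → ℝ be continuously differentiable with s' > 0, s(y*) = 0 and lim_{x→r} s(x) = +∞, let σ : (l,r) → (0,∞) be continuous, and let c > 0. Define s̃(x) := (1 + c(s(x) + |s(x)|)) / (2(1 + c|s(x)|)) and m̃(z) := 4(1 + c|s(z)|)² / (c·σ(z)²·s'(z)). Then lim_{x→r} ∫_{y*}^x (s̃(x) − s̃(z))·m̃(z) dz = ∞ if and only if ∫_{y*}^r s(z)/(σ(z)²·s'(z)) dz = ∞. -/
open MeasureTheory Set Filter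
open scoped ENNReal

lemma near_neBot (l r : EReal) (y : ℝ) (hy : y ∈ Iab l r) : (nearFilter r l r).NeBot := by
  unfold nearFilter
  rw [Filter.inf_principal_neBot_iff]
  intro U hU
  obtain ⟨V, hV, hVU⟩ := Filter.mem_comap.1 hU
  obtain ⟨a, ha, haV⟩ := exists_Ioc_subset_of_mem_nhds hV ⟨_, hy.2⟩
  obtain ⟨x, hx1, hx2⟩ := EReal.lt_iff_exists_real_btwn.1 (max_lt ha hy.2)
  refine ⟨x, hVU (haV ⟨(le_max_left _ _).trans_lt hx1, hx2.le⟩), ?_, hx2⟩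
  exact hy.1.trans ((le_max_right _ _).trans_lt hx1)

lemma near_gt (l r : EReal) (y : ℝ) (hy : (y : EReal) < r) :
    ∀ᶠ x in nearFilter r l r, y < x := by
  unfold nearFilter
  apply Filter.Eventually.filter_mono inf_le_left
  have : ∀ᶠ z in nhds r, (y : EReal) < z := lt_mem_nhds hy
  filter_upwards [Filter.preimage_mem_comap this] with x hx
  exact EReal.coe_lt_coe_iff.1 hx

lemma near_mem (l r : EReal) : ∀ᶠ x in nearFilter r l r, x ∈ Iab l r := by
  unfold nearFilter
  exact Filter.Eventually.filter_mono inf_le_right (Filter.mem_principal_self _)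

lemma near_cg (l r : EReal) : (nearFilter r l r).IsCountablyGenerated := by
  unfold nearFilter
  infer_instance

lemma Icc_sub {l r : EReal} {a b : ℝ} (ha : a ∈ Iab l r) (hb : b ∈ Iab l r) :
    Icc a b ⊆ Iab l r := fun z hz =>
  ⟨ha.1.trans_le (EReal.coe_le_coe_iff.2 hz.1), (EReal.coe_le_coe_iff.2 hz.2).trans_lt hb.2⟩

lemma algebra_id (c S t w : ℝ) (hc : 0 < c) (hS : 0 ≤ S) (ht : 0 ≤ t) (q p : ℝ) (hw : w = q ^ 2 * p)
    (hp : 0 < w) :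
    ((1 + c * (S + |S|)) / (2 * (1 + c * |S|))
            - (1 + c * (t + |t|)) / (2 * (1 + c * |t|)))
          * (4 * (1 + c * |t|) ^ 2 / (c * q ^ 2 * p))
      = 2 * ((S - t) / (1 + c * S)) * ((1 + c * t) / w) := by
  rw [abs_of_nonneg hS, abs_of_nonneg ht, mul_assoc c, ← hw]
  have h1 : 1 + c * S ≠ 0 := by positivity
  have h2 : 1 + c * t ≠ 0 := by positivity
  field_simp
  ring

lemma tendsto_G (l r : EReal) (y : ℝ) (hy : y ∈ Iab l r) (g : ℝ → ℝ)
    (hg : ContinuousOn g (Iab l r)) (hpos : ∀ z ∈ Iab l r, y ≤ z → 0 ≤ g z) :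
    Tendsto (fun x => ENNReal.ofReal (∫ z in y..x, g z)) (nearFilter r l r)
      (nhds (∫⁻ z in {z : ℝ | y < z ∧ (z : EReal) < r}, ENNReal.ofReal (g z))) := by
  haveI := near_cg l r
  set J : Set ℝ := {z : ℝ | y < z ∧ (z : EReal) < r} with hJ
  have hJm : MeasurableSet J :=
    (measurableSet_lt measurable_const measurable_id).inter
      (measurableSet_lt measurable_coe_real_ereal measurable_const)
  have hJI : J ⊆ Iab l r := fun z hz => ⟨hy.1.trans (EReal.coe_lt_coe_iff.2 hz.1), hz.2⟩
  have hcov : AECover (volume.restrict J) (nearFilter r l r) (fun x => Iic x) := by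
    constructor
    · filter_upwards [ae_restrict_mem hJm] with z hz
      filter_upwards [near_gt l r z hz.2] with x hx
      exact hx.le
    · intro i; exact measurableSet_Iic
  have hm : AEMeasurable (fun z => ENNReal.ofReal (g z)) (volume.restrict J) :=
    ((hg.mono hJI).aemeasurable hJm).ennreal_ofReal
  refine (hcov.lintegral_tendsto_of_countably_generated hm).congr' ?_
  filter_upwards [near_gt l r y hy.2, near_mem l r] with x hx hxI
  have hs : Iic x ∩ J = Ioc y x := by
    ext z
    constructor
    · rintro ⟨h1, h2⟩; exact ⟨h2.1, h1⟩
    · rintro ⟨h1, h2⟩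
      exact ⟨h2, h1, (Icc_sub hy hxI ⟨h1.le, h2⟩).2⟩
  rw [Measure.restrict_restrict measurableSet_Iic, hs, intervalIntegral.integral_of_le hx.le,
    ofReal_integral_eq_lintegral_ofReal]
  · exact ((hg.mono (Icc_sub hy hxI)).integrableOn_Icc).mono_set Ioc_subset_Icc_self
  · filter_upwards [ae_restrict_mem measurableSet_Ioc] with z hz
    exact hpos z (Icc_sub hy hxI ⟨hz.1.le, hz.2⟩) hz.1.le

/-- Feller's test for the transformed diffusion: with
`s̃(x) = (1 + c(s(x)+|s(x)|))/(2(1 + c|s(x)|))` and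
`m̃(z) = 4(1 + c|s(z)|)²/(c σ(z)² s'(z))`, the quantity
`∫_{y*}^x (s̃(x) − s̃(z)) m̃(z) dz` tends to `∞` as `x → r` if and only if
`∫_{y*}^r s(z)/(σ(z)² s'(z)) dz = ∞`. -/
theorem stmt_12 (l r : EReal) (ystar : ℝ) (hy : ystar ∈ Iab l r)
    (s s' σ : ℝ → ℝ) (c : ℝ) (hc : 0 < c)
    (hderiv : ∀ x ∈ Iab l r, HasDerivAt s (s' x) x)
    (hs'cont : ContinuousOn s' (Iab l r))
    (hs'pos : ∀ x ∈ Iab l r, 0 < s' x)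
    (hsy : s ystar = 0)
    (hr : Tendsto s (nearFilter r l r) Filter.atTop)
    (hσcont : ContinuousOn σ (Iab l r)) (hσpos : ∀ x ∈ Iab l r, 0 < σ x) :
    Tendsto (fun x => ∫ z in ystar..x,
        ((1 + c * (s x + |s x|)) / (2 * (1 + c * |s x|))
            - (1 + c * (s z + |s z|)) / (2 * (1 + c * |s z|)))
          * (4 * (1 + c * |s z|) ^ 2 / (c * σ z ^ 2 * s' z)))
      (nearFilter r l r) Filter.atTop
    ↔ ∫⁻ z in {z : ℝ | ystar < z ∧ (z : EReal) < r},
        ENNReal.ofReal (s z / (σ z ^ 2 * s' z)) = ⊤ := by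
  haveI := near_neBot l r ystar hy
  have hscont : ContinuousOn s (Iab l r) := fun x hx => (hderiv x hx).continuousAt.continuousWithinAt
  have hmono : ∀ a ∈ Iab l r, ∀ b ∈ Iab l r, a ≤ b → s a ≤ s b := by
    intro a ha b hb hab
    have hsub := Icc_sub ha hb
    have : MonotoneOn s (Icc a b) := by
      apply monotoneOn_of_deriv_nonneg (convex_Icc a b) (hscont.mono hsub)
      · intro x hx
        exact (hderiv x (hsub (interior_subset hx))).differentiableAt.differentiableWithinAt
      · intro x hx
        rw [(hderiv x (hsub (interior_subset hx))).deriv]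
        exact (hs'pos x (hsub (interior_subset hx))).le
    exact this (left_mem_Icc.2 hab) (right_mem_Icc.2 hab) hab
  have hs0 : ∀ z ∈ Iab l r, ystar ≤ z → 0 ≤ s z := fun z hz h => hsy ▸ hmono _ hy z hz h
  set w : ℝ → ℝ := fun z => σ z ^ 2 * s' z with hw
  have hwpos : ∀ z ∈ Iab l r, 0 < w z := fun z hz => mul_pos (pow_pos (hσpos z hz) 2) (hs'pos z hz)
  have hwcont : ContinuousOn w (Iab l r) := (hσcont.pow 2).mul hs'cont
  have hgcont : ContinuousOn (fun z => s z / w z) (Iab l r) :=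
    hscont.div hwcont fun z hz => (hwpos z hz).ne'
  have hicont : ContinuousOn (fun z => 1 / w z) (Iab l r) :=
    continuousOn_const.div hwcont fun z hz => (hwpos z hz).ne'
  have hii : ∀ f : ℝ → ℝ, ContinuousOn f (Iab l r) → ∀ a ∈ Iab l r, ∀ b ∈ Iab l r, a ≤ b →
      IntervalIntegrable f volume a b := fun f hf a ha b hb hab =>
    (hf.mono (Icc_sub ha hb)).intervalIntegrable_of_Icc hab
  have hgpos : ∀ z ∈ Iab l r, ystar ≤ z → 0 ≤ s z / w z := fun z hz h =>
    div_nonneg (hs0 z hz h) (hwpos z hz).le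
  have hG := tendsto_G l r ystar hy (fun z => s z / w z) hgcont hgpos
  set L := ∫⁻ z in {z : ℝ | ystar < z ∧ (z : EReal) < r}, ENNReal.ofReal (s z / w z) with hL
  have hkcont : ∀ x, ContinuousOn
      (fun z => 2 * ((s x - s z) / (1 + c * s x)) * ((1 + c * s z) / w z)) (Iab l r) := by
    intro x
    exact (continuousOn_const.mul ((continuousOn_const.sub hscont).div_const _)).mul
      ((continuousOn_const.add (continuousOn_const.mul hscont)).div hwcont
        fun z hz => (hwpos z hz).ne')
  have hF : ∀ x ∈ Iab l r, ystar ≤ x → (∫ z in ystar..x,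
        ((1 + c * (s x + |s x|)) / (2 * (1 + c * |s x|))
            - (1 + c * (s z + |s z|)) / (2 * (1 + c * |s z|)))
          * (4 * (1 + c * |s z|) ^ 2 / (c * σ z ^ 2 * s' z)))
      = ∫ z in ystar..x, 2 * ((s x - s z) / (1 + c * s x)) * ((1 + c * s z) / w z) := by
    intro x hx hyx
    apply intervalIntegral.integral_congr
    intro z hz
    rw [uIcc_of_le hyx] at hz
    have hzI := Icc_sub hy hx hz
    exact algebra_id c (s x) (s z) (w z) hc (hs0 x hx hyx) (hs0 z hzI hz.1) _ _ rfl (hwpos z hzI)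
  constructor
  · intro hT
    by_contra hne
    obtain ⟨b, ⟨hb1, hby⟩, hbI⟩ := ((hr.eventually_ge_atTop 1).and
      (near_gt l r ystar hy.2)).and (near_mem l r) |>.exists
    have hlt : L < L + 1 := ENNReal.lt_add_right hne one_ne_zero
    have hne' : L + 1 ≠ ⊤ := ENNReal.add_ne_top.2 ⟨hne, ENNReal.one_ne_top⟩
    set K := (L + 1).toReal with hK
    set B := ∫ z in ystar..b, 1 / w z with hB
    obtain ⟨x, ⟨⟨hx1, hx2⟩, hxI⟩, hx3⟩ := (((hT.eventually_gt_atTop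
      ((2 / c) * ((B + K) + c * K))).and
      (near_gt l r b hbI.2)).and (near_mem l r)).and (hG.eventually_lt_const hlt) |>.exists
    have hyx : ystar ≤ x := hby.le.trans hx2.le
    rw [hF x hxI hyx] at hx1
    have hGx : ∫ z in ystar..x, s z / w z ≤ K := by
      exact (ENNReal.ofReal_le_iff_le_toReal hne').1 hx3.le
    have i1 := hii _ hicont _ hy _ hbI hby.le
    have i2 := hii _ hicont _ hbI _ hxI hx2.le
    have g1 := hii _ hgcont _ hy _ hbI hby.le
    have g2 := hii _ hgcont _ hbI _ hxI hx2.le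
    have e1 := intervalIntegral.integral_add_adjacent_intervals i1 i2
    have e2 := intervalIntegral.integral_add_adjacent_intervals g1 g2
    have p1 : 0 ≤ ∫ z in ystar..b, s z / w z :=
      intervalIntegral.integral_nonneg hby.le fun z hz => hgpos z (Icc_sub hy hbI hz) hz.1
    have p2 : ∫ z in b..x, 1 / w z ≤ ∫ z in b..x, s z / w z := by
      apply intervalIntegral.integral_mono_on hx2.le i2 g2
      intro z hz
      have hzI := Icc_sub hbI hxI hz
      exact div_le_div_of_nonneg_right (hb1.trans (hmono b hbI z hzI hz.1)) (hwpos z hzI).le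
    have p3 : (∫ z in ystar..x, 2 * ((s x - s z) / (1 + c * s x)) * ((1 + c * s z) / w z))
        ≤ ∫ z in ystar..x, (2 / c) * (1 / w z + c * (s z / w z)) := by
      apply intervalIntegral.integral_mono_on hyx (hii _ (hkcont x) _ hy _ hxI hyx)
        (((i1.trans i2).add ((g1.trans g2).const_mul c)).const_mul _)
      intro z hz
      have hzI := Icc_sub hy hxI hz
      have hz0 := hs0 z hzI hz.1
      have hx0 := hs0 x hxI hyx
      have hwz := hwpos z hzI
      have : 2 * ((s x - s z) / (1 + c * s x)) ≤ 2 / c := by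
        rw [← mul_div_assoc, div_le_div_iff₀ (by positivity) hc]
        nlinarith [mul_nonneg hc.le hz0]
      calc _ ≤ 2 / c * ((1 + c * s z) / w z) := mul_le_mul_of_nonneg_right this (by positivity)
        _ = _ := by ring
    rw [intervalIntegral.integral_const_mul, intervalIntegral.integral_add (i1.trans i2)
      ((g1.trans g2).const_mul c), intervalIntegral.integral_const_mul] at p3
    have p4 : (∫ z in ystar..x, 1 / w z) + c * (∫ z in ystar..x, s z / w z) ≤ B + K + c * K := by
      have := mul_le_mul_of_nonneg_left hGx hc.le
      linarith
    have p5 := mul_le_mul_of_nonneg_left p4 (by positivity : 0 ≤ 2 / c)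
    linarith
  · intro hT
    rw [hT] at hG
    rw [tendsto_atTop]
    intro M
    obtain ⟨b, ⟨hbM, hby⟩, hbI⟩ := ((hG.eventually_const_lt
      (ENNReal.ofReal_lt_top (r := 2 * M))).and
      (near_gt l r ystar hy.2)).and (near_mem l r) |>.exists
    have hbM' : 2 * M ≤ ∫ z in ystar..b, s z / w z := by
      by_contra! h
      exact absurd hbM (not_lt.2 (ENNReal.ofReal_le_ofReal h.le))
    filter_upwards [hr.eventually_ge_atTop (2 * s b + 1 / c), near_gt l r b hbI.2,
      near_mem l r] with x hxs hbx hxI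
    have hyx : ystar ≤ x := hby.le.trans hbx.le
    rw [hF x hxI hyx]
    have hb0 := hs0 b hbI hby.le
    have hx0 := hs0 x hxI hyx
    have hcS : 1 ≤ c * s x - 2 * c * s b := by
      have := mul_le_mul_of_nonneg_left hxs hc.le
      rw [mul_add, mul_one_div_cancel hc.ne'] at this
      linarith
    have k1 := hii _ (hkcont x) _ hy _ hbI hby.le
    have k2 := hii _ (hkcont x) _ hbI _ hxI hbx.le
    have e := intervalIntegral.integral_add_adjacent_intervals k1 k2
    have q1 : 0 ≤ ∫ z in b..x, 2 * ((s x - s z) / (1 + c * s x)) * ((1 + c * s z) / w z) := by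
      apply intervalIntegral.integral_nonneg hbx.le
      intro z hz
      have hzI := Icc_sub hbI hxI hz
      have hz0 := hs0 z hzI (hby.le.trans hz.1)
      have hwz := hwpos z hzI
      have := sub_nonneg.2 (hmono z hzI x hxI hz.2)
      positivity
    have q2 : (∫ z in ystar..b, (1 / 2) * (s z / w z)) ≤
        ∫ z in ystar..b, 2 * ((s x - s z) / (1 + c * s x)) * ((1 + c * s z) / w z) := by
      apply intervalIntegral.integral_mono_on hby.le
        ((hii _ hgcont _ hy _ hbI hby.le).const_mul _) k1
      intro z hz
      have hzI := Icc_sub hy hbI hz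
      have hz0 := hs0 z hzI hz.1
      have hwz := hwpos z hzI
      have hzb := mul_le_mul_of_nonneg_left (hmono z hzI b hbI hz.2) hc.le
      have h1 : 1 / (2 * c) ≤ 2 * ((s x - s z) / (1 + c * s x)) := by
        rw [← mul_div_assoc, div_le_div_iff₀ (by positivity) (by positivity)]
        nlinarith [mul_nonneg hc.le hb0]
      calc (1 / 2) * (s z / w z) = 1 / (2 * c) * ((c * s z) / w z) := by field_simp
        _ ≤ 1 / (2 * c) * ((1 + c * s z) / w z) := by gcongr; linarith
        _ ≤ _ := mul_le_mul_of_nonneg_right h1 (by positivity)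
    rw [intervalIntegral.integral_const_mul] at q2
    linarith
end

section
/- Let −∞ ≤ l < r ≤ ∞, let σ : (l,r) → (0,∞) and b : (l,r) → ℝ be continuous, and let s : (l,r) → ℝ be twice continuously differentiable with s' > 0 and (1/2)σ(x)²·s''(x) + b(x)·s'(x) = 0 for all x ∈ (l,r). Fix y ∈ (l,r) and define u(x) := s(min(x,y))·(1 − s(max(x,y))). Then for every continuously differentiable f : (l,r) → ℝ with compact support, ∫_l^r f(x)·(b(x)/σ(x)²)·u'(x) dx = −(1/2)·( s'(y)·f(y) − ∫_l^r f'(x)·u'(x) dx ), where u' denotes the derivative of u, defined for x ≠ y. -/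
open MeasureTheory Set
open scoped ENNReal

lemma aux_cont {U : Set ℝ} (hU : IsOpen U) {φ ψ : ℝ → ℝ} (hφ : Continuous φ)
    (h : tsupport φ ⊆ U) (hψ : ContinuousOn ψ U) : Continuous (fun x => φ x * ψ x) := by
  rw [continuous_iff_continuousAt]
  intro x
  by_cases hx : x ∈ tsupport φ
  · exact hφ.continuousAt.mul (hψ.continuousAt (hU.mem_nhds (h hx)))
  · have h0 := notMem_tsupport_iff_eventuallyEq.mp hx
    have h1 : (fun x => φ x * ψ x) =ᶠ[nhds x] fun _ => (0 : ℝ) := by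
      filter_upwards [h0] with z hz
      simp [hz]
    exact (continuousAt_const).congr h1.symm

lemma aux_split (y A B : ℝ) (F : ℝ → ℝ) (hF : Integrable F) :
    ∫ x, F x * (if x ≤ y then A else B) = A * (∫ x in Iic y, F x) + B * ∫ x in Ioi y, F x := by
  have e1 : ∫ x in Iic y, F x * (if x ≤ y then A else B) = ∫ x in Iic y, A * F x := by
    refine setIntegral_congr_fun measurableSet_Iic fun x hx => ?_
    have hx' : x ≤ y := hx
    simp only [if_pos hx']; ring
  have e2 : ∫ x in Ioi y, F x * (if x ≤ y then A else B) = ∫ x in Ioi y, B * F x := by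
    refine setIntegral_congr_fun measurableSet_Ioi fun x hx => ?_
    have hx' : ¬ x ≤ y := not_le.mpr hx
    simp only [if_neg hx']; ring
  have i1 : IntegrableOn (fun x => F x * (if x ≤ y then A else B)) (Iic y) := by
    refine ((hF.const_mul A).integrableOn (s := Iic y)).congr_fun (fun x hx => ?_) measurableSet_Iic
    have hx' : x ≤ y := hx
    simp only [if_pos hx']; ring
  have i2 : IntegrableOn (fun x => F x * (if x ≤ y then A else B)) (Ioi y) := by
    refine ((hF.const_mul B).integrableOn (s := Ioi y)).congr_fun (fun x hx => ?_) measurableSet_Ioi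
    have hx' : ¬ x ≤ y := not_le.mpr hx
    simp only [if_neg hx']; ring
  rw [← intervalIntegral.integral_Iic_add_Ioi i1 i2, e1, e2, integral_const_mul,
    integral_const_mul]

/-- Integration-by-parts identity for the potential density `u(x) = s(x∧y)(1−s(x∨y))` of
a diffusion with harmonic scale `s` (i.e. `(1/2)σ²s'' + b s' = 0`): for every `C¹`
function `f` with compact support in `(l,r)`,
`∫ f·(b/σ²)·u' = −(1/2)(s'(y)·f(y) − ∫ f'·u')`, where `u'` is the derivative of `u`
away from `y`. -/
theorem stmt_14 (l r : EReal) (σ b : ℝ → ℝ) (s s' s'' : ℝ → ℝ) (y : ℝ) (hy : y ∈ Iab l r)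
    (hσcont : ContinuousOn σ (Iab l r)) (hσpos : ∀ x ∈ Iab l r, 0 < σ x)
    (hbcont : ContinuousOn b (Iab l r))
    (hs1 : ∀ x ∈ Iab l r, HasDerivAt s (s' x) x)
    (hs2 : ∀ x ∈ Iab l r, HasDerivAt s' (s'' x) x)
    (hs''cont : ContinuousOn s'' (Iab l r))
    (hs'pos : ∀ x ∈ Iab l r, 0 < s' x)
    (hharm : ∀ x ∈ Iab l r, (1 / 2) * σ x ^ 2 * s'' x + b x * s' x = 0)
    (f : ℝ → ℝ) (hf : ContDiff ℝ 1 f) (hsupp : HasCompactSupport f)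
    (hfsupp : tsupport f ⊆ Iab l r) :
    ∫ x in Iab l r, f x * (b x / σ x ^ 2) *
        (if x ≤ y then s' x * (1 - s y) else -(s' x * s y))
      = -(1 / 2) * (s' y * f y -
          ∫ x in Iab l r, deriv f x *
            (if x ≤ y then s' x * (1 - s y) else -(s' x * s y))) := by
  have hU : IsOpen (Iab l r) := by
    have : Iab l r = (fun x : ℝ => (x : EReal)) ⁻¹' (Ioo l r) := rfl
    rw [this]
    exact isOpen_Ioo.preimage continuous_coe_real_ereal
  have hs'c : ContinuousOn s' (Iab l r) := fun x hx => (hs2 x hx).continuousAt.continuousWithinAt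
  have hdf : Continuous (deriv f) := hf.continuous_deriv le_rfl
  have hds : tsupport (deriv f) ⊆ tsupport f := closure_minimal support_deriv_subset isClosed_closure
  have cP := aux_cont hU hdf (hds.trans hfsupp) hs'c
  have cQ := aux_cont hU hf.continuous hfsupp hs''cont
  have sP : HasCompactSupport (fun x => deriv f x * s' x) := hsupp.deriv.mul_right
  have sQ : HasCompactSupport (fun x => f x * s'' x) := hsupp.mul_right
  have sG : HasCompactSupport (fun x => f x * s' x) := hsupp.mul_right
  have iP := cP.integrable_of_hasCompactSupport sP (μ := volume)
  have iQ := cQ.integrable_of_hasCompactSupport sQ (μ := volume)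
  have hG : ∀ x, HasDerivAt (fun x => f x * s' x) (deriv f x * s' x + f x * s'' x) x := by
    intro x
    by_cases hx : x ∈ tsupport f
    · exact ((hf.differentiable one_ne_zero).differentiableAt.hasDerivAt).mul (hs2 x (hfsupp hx))
    · have h0 := notMem_tsupport_iff_eventuallyEq.mp hx
      have h1 : (fun x => f x * s' x) =ᶠ[nhds x] fun _ => (0 : ℝ) := by
        filter_upwards [h0] with z hz
        simp [hz]
      have h2 : deriv f x = 0 := by
        by_contra hne
        exact hx (hds (subset_tsupport _ hne))
      have h3 : f x = 0 := image_eq_zero_of_notMem_tsupport hx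
      rw [h2, h3]
      simpa using (hasDerivAt_const x (0 : ℝ)).congr_of_eventuallyEq h1
  have hder : deriv (fun x => f x * s' x) = fun x => deriv f x * s' x + f x * s'' x :=
    funext fun x => (hG x).deriv
  have hG1 : ContDiff ℝ 1 (fun x => f x * s' x) := by
    rw [contDiff_one_iff_deriv]
    refine ⟨fun x => (hG x).differentiableAt, ?_⟩
    rw [hder]
    exact cP.add cQ
  have k1 := HasCompactSupport.integral_Iic_deriv_eq hG1 sG y
  have k2 := HasCompactSupport.integral_Ioi_deriv_eq hG1 sG y
  rw [hder, integral_add iP.integrableOn iQ.integrableOn] at k1 k2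
  have z1 : ∫ x in Iab l r, f x * (b x / σ x ^ 2) *
        (if x ≤ y then s' x * (1 - s y) else -(s' x * s y))
      = -(1 / 2) * ∫ x, (f x * s'' x) * (if x ≤ y then 1 - s y else - s y) := by
    rw [← setIntegral_eq_integral_of_forall_compl_eq_zero (s := Iab l r) (μ := volume)
      (f := fun x => (f x * s'' x) * (if x ≤ y then 1 - s y else - s y)), ← integral_const_mul]
    · refine setIntegral_congr_fun hU.measurableSet fun x hx => ?_
      have h1 := hharm x hx
      have h2 := (hσpos x hx).ne'
      have h3 : b x / σ x ^ 2 * s' x = -(1/2) * s'' x := by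
        field_simp
        linarith
      split_ifs
      · linear_combination f x * (1 - s y) * h3
      · linear_combination - f x * s y * h3
    · intro x hx
      simp [image_eq_zero_of_notMem_tsupport (fun h => hx (hfsupp h))]
  have z2 : ∫ x in Iab l r, deriv f x * (if x ≤ y then s' x * (1 - s y) else -(s' x * s y))
      = ∫ x, (deriv f x * s' x) * (if x ≤ y then 1 - s y else - s y) := by
    rw [← setIntegral_eq_integral_of_forall_compl_eq_zero (s := Iab l r) (μ := volume)
      (f := fun x => (deriv f x * s' x) * (if x ≤ y then 1 - s y else - s y))]
    · refine setIntegral_congr_fun hU.measurableSet fun x hx => ?_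
      split_ifs <;> ring
    · intro x hx
      simp [image_eq_zero_of_notMem_tsupport (fun h => hx (hfsupp (hds h)))]
  rw [z1, z2, aux_split _ _ _ _ iP, aux_split _ _ _ _ iQ]
  linear_combination -(1/2) * (1 - s y) * k1 + (1/2) * s y * k2
end
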